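/- arXiv:2412.19485 — 2 statements merged into one kernel-verified Lean document; each statement's English description precedes it below -/
import Mathlib

section
/- Let S be a factorizable inverse monoid with zero, with semilattice of idempotents E and group of units G, such that the natural connection θ is a dual isomorphism from E onto a sublattice of L(G). Let E_sc (resp. E_c) denote the partially ordered set of all subcentral (resp. central) idempotents of S under the natural order. Then S has a composition subcentral (resp. composition central) idempotent series if and only if E_sc (resp. E_c) satisfies both the ascending chain condition and the descending chain condition. -/
/-- An inverse monoid: a monoid in which every element `a` has an inverse `a⁻¹`
satisfying `a * a⁻¹ * a = a` and `a⁻¹ * a * a⁻¹ = a⁻¹`, and this inverse is unique. -/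
class InverseMonoid (S : Type*) extends Monoid S, Inv S where
  mul_inv_mul : ∀ a : S, a * a⁻¹ * a = a
  inv_mul_inv : ∀ a : S, a⁻¹ * a * a⁻¹ = a⁻¹
  inv_unique : ∀ a b : S, a * b * a = a → b * a * b = b → b = a⁻¹

/-- An inverse monoid with a (two-sided absorbing) zero element. -/
class InverseMonoidWithZero (S : Type*) extends InverseMonoid S, Zero S where
  zero_mul : ∀ a : S, 0 * a = 0
  mul_zero : ∀ a : S, a * 0 = 0

/-- The natural partial order on an inverse monoid: `a ≤ b` iff `a = e * b`
for some idempotent `e`. -/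
def NatLe {S : Type*} [Monoid S] (a b : S) : Prop :=
  ∃ e : S, IsIdempotentElem e ∧ a = e * b

/-- The filter `e↑ = {s | e ≤ s}` generated by `e`. -/
def upfilter {S : Type*} [Monoid S] (e : S) : Set S := {s | NatLe e s}

/-- `c` is central in (a subset) `T`: it belongs to `T` and commutes with all elements of `T`. -/
def CentralIn {S : Type*} [Mul S] (T : Set S) (c : S) : Prop :=
  c ∈ T ∧ ∀ s ∈ T, c * s = s * c

/-- A monoid is factorizable if every element is a product of an idempotent and a unit. -/
def Factorizable (S : Type*) [Monoid S] : Prop :=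
  ∀ s : S, ∃ e g : S, IsIdempotentElem e ∧ IsUnit g ∧ s = e * g

/-- The natural connection `θ`: for an (idempotent) `e`, the subgroup
`eθ = {g ∈ G : e * g = e}` of the group of units. -/
def natconn {S : Type*} [Monoid S] (e : S) : Subgroup Sˣ where
  carrier := {g : Sˣ | e * (g : S) = e}
  one_mem' := by simp
  mul_mem' := by
    intro a b ha hb
    simp only [Set.mem_setOf_eq, Units.val_mul] at *
    rw [← mul_assoc, ha, hb]
  inv_mem' := by
    intro a ha
    simp only [Set.mem_setOf_eq] at *
    nth_rewrite 1 [← ha]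
    rw [mul_assoc, ← Units.val_mul, mul_inv_cancel, Units.val_one, mul_one]

/-- The natural connection is a dual isomorphism from the idempotents onto a
sublattice of the lattice of subgroups of the group of units: it is injective on
idempotents, order-reversing in both directions, and its image is closed under
joins and meets of subgroups. -/
def NatconnDualIso (S : Type*) [Monoid S] : Prop :=
  (∀ e f : S, IsIdempotentElem e → IsIdempotentElem f → natconn e = natconn f → e = f) ∧
  (∀ e f : S, IsIdempotentElem e → IsIdempotentElem f →
    (NatLe e f ↔ natconn f ≤ natconn e)) ∧
  (∀ e f : S, IsIdempotentElem e → IsIdempotentElem f →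
    (∃ h : S, IsIdempotentElem h ∧ natconn h = natconn e ⊔ natconn f) ∧
    (∃ h : S, IsIdempotentElem h ∧ natconn h = natconn e ⊓ natconn f))

/-- `j` is the join (least upper bound) of `e` and `f` with respect to the natural order. -/
def IsNatJoin {S : Type*} [Monoid S] (e f j : S) : Prop :=
  NatLe e j ∧ NatLe f j ∧ ∀ x : S, NatLe e x → NatLe f x → NatLe j x

/-- `F_{e,f} = f · e↑`. -/
def Fef {S : Type*} [Monoid S] (e f : S) : Set S := (f * ·) '' upfilter e

/-- `UF_{e,f}`: the group of units of the monoid `F_{e,f}` (whose identity is `f`). -/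
def UFef {S : Type*} [Monoid S] (e f : S) : Set S :=
  {x ∈ Fef e f | ∃ y ∈ Fef e f, x * y = f ∧ y * x = f}

/-- The centre of a subset `T`. -/
def ZIn {S : Type*} [Mul S] (T : Set S) : Set S := {x ∈ T | ∀ y ∈ T, x * y = y * x}

/-- Two subsets are isomorphic as semigroups (with the induced multiplication). -/
def SubIso {S : Type*} [Mul S] (A B : Set S) : Prop :=
  ∃ φ : S → S, Set.BijOn φ A B ∧ ∀ a ∈ A, ∀ b ∈ A, φ (a * b) = φ a * φ b

/-- A subcentral idempotent series between `0` and `a`. -/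
def IsSubcentralSeriesBetween {S : Type*} [Monoid S] [Zero S] (n : ℕ) (c : ℕ → S) (a : S) :
    Prop :=
  c 0 = 0 ∧ c n = a ∧ (∀ i ≤ n, IsIdempotentElem (c i)) ∧
    ∀ i < n, CentralIn (upfilter (c i)) (c (i + 1))

/-- A subcentral idempotent series of `S` (between `0` and `1`). -/
def IsSubcentralSeries {S : Type*} [Monoid S] [Zero S] (n : ℕ) (c : ℕ → S) : Prop :=
  IsSubcentralSeriesBetween n c 1

/-- A central idempotent series of `S`. -/
def IsCentralSeries {S : Type*} [Monoid S] [Zero S] (n : ℕ) (c : ℕ → S) : Prop :=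
  c 0 = 0 ∧ c n = 1 ∧ (∀ i ≤ n, IsIdempotentElem (c i)) ∧
    (∀ i < n, NatLe (c i) (c (i + 1))) ∧
    ∀ i < n, CentralIn Set.univ (c (i + 1))

/-- A subcentral idempotent: one occurring in some subcentral idempotent series of `S`. -/
def IsSubcentralIdem {S : Type*} [Monoid S] [Zero S] (e : S) : Prop :=
  ∃ (n : ℕ) (c : ℕ → S), IsSubcentralSeries n c ∧ ∃ i ≤ n, c i = e

/-- A `G`-nilpotent series: a chain of central idempotents from `0` to `1` with
`F_{eᵢ,eᵢ₊₁} ⊆ Z(F_{0,eᵢ₊₁})`. -/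
def GNilpotentSeries {S : Type*} [Monoid S] [Zero S] (n : ℕ) (c : ℕ → S) : Prop :=
  c 0 = 0 ∧ c n = 1 ∧ (∀ i ≤ n, IsIdempotentElem (c i) ∧ CentralIn Set.univ (c i)) ∧
    (∀ i < n, NatLe (c i) (c (i + 1))) ∧
    ∀ i < n, Fef (c i) (c (i + 1)) ⊆ ZIn (Fef 0 (c (i + 1)))

/-- A `G`-solvable series: a chain of central idempotents from `0` to `1` with
each `F_{eᵢ,eᵢ₊₁}` commutative. -/
def GSolvableSeries {S : Type*} [Monoid S] [Zero S] (n : ℕ) (c : ℕ → S) : Prop :=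
  c 0 = 0 ∧ c n = 1 ∧ (∀ i ≤ n, IsIdempotentElem (c i) ∧ CentralIn Set.univ (c i)) ∧
    (∀ i < n, NatLe (c i) (c (i + 1))) ∧
    ∀ i < n, ∀ x ∈ Fef (c i) (c (i + 1)), ∀ y ∈ Fef (c i) (c (i + 1)), x * y = y * x

/-- `S` is `G`-nilpotent. -/
def GNilpotent (S : Type*) [Monoid S] [Zero S] : Prop :=
  ∃ (n : ℕ) (c : ℕ → S), GNilpotentSeries n c

/-- `S` is `G`-solvable. -/
def GSolvable (S : Type*) [Monoid S] [Zero S] : Prop :=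
  ∃ (n : ℕ) (c : ℕ → S), GSolvableSeries n c

/-- Two idempotent series are isomorphic: same length, and a one-to-one correspondence
between their factors under which corresponding factors are isomorphic. -/
def SeriesIso {S : Type*} [Monoid S] (n : ℕ) (c : ℕ → S) (n' : ℕ) (d : ℕ → S) : Prop :=
  n = n' ∧ ∃ σ : ℕ → ℕ, Set.BijOn σ {i | i < n} {i | i < n'} ∧
    ∀ i < n, SubIso (Fef (c i) (c (i + 1))) (Fef (d (σ i)) (d (σ i + 1)))

/-- A composition series (for a kind `P` of series): it has no repeated terms, and any
refinement of it (of the same kind) only repeats its terms. -/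
def IsCompositionOf {S : Type*} (P : ℕ → (ℕ → S) → Prop) (n : ℕ) (c : ℕ → S) : Prop :=
  P n c ∧ (∀ i ≤ n, ∀ j ≤ n, c i = c j → i = j) ∧
    ∀ (m : ℕ) (d : ℕ → S), P m d → (∀ i ≤ n, ∃ j ≤ m, d j = c i) →
      ∀ j ≤ m, ∃ i ≤ n, d j = c i

section Generic

theorem aux_supel {G : Type*} [Group G] {B C : Subgroup G}
    (h : ∀ c ∈ C, ∀ b ∈ B, c * b * c⁻¹ ∈ B) {x : G} (hx : x ∈ B ⊔ C) :
    ∃ b ∈ B, ∃ c ∈ C, x = b * c := by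
  let K : Subgroup G :=
    { carrier := {x | ∃ b ∈ B, ∃ c ∈ C, x = b * c}
      one_mem' := ⟨1, B.one_mem, 1, C.one_mem, by simp⟩
      mul_mem' := by
        rintro _ _ ⟨b, hb, c, hc, rfl⟩ ⟨b', hb', c', hc', rfl⟩
        exact ⟨b * (c * b' * c⁻¹), B.mul_mem hb (h c hc b' hb'), c * c', C.mul_mem hc hc', by group⟩
      inv_mem' := by
        rintro _ ⟨b, hb, c, hc, rfl⟩
        refine ⟨c⁻¹ * b⁻¹ * c⁻¹⁻¹, h _ (C.inv_mem hc) _ (B.inv_mem hb), c⁻¹, C.inv_mem hc, by group⟩ }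
  have : B ⊔ C ≤ K := sup_le (fun b hb => ⟨b, hb, 1, C.one_mem, by simp⟩)
    (fun c hc => ⟨1, B.one_mem, c, hc, by simp⟩)
  exact this hx

/-- `A` normalizes `B`. -/
def NormBy {G : Type*} [Group G] (A B : Subgroup G) : Prop :=
  ∀ g ∈ A, ∀ x ∈ B, g * x * g⁻¹ ∈ B

theorem aux_zass {G : Type*} [Group G] {A A' B B' : Subgroup G}
    (hA : NormBy A A') (hB : NormBy B B') :
    NormBy (B' ⊔ (A ⊓ B)) (B' ⊔ (A' ⊓ B)) := by
  intro g hg x hx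
  obtain ⟨b, hb, a, ha, rfl⟩ := aux_supel (fun c (hc : c ∈ _ ⊓ B) b hb => hB c hc.2 b hb) hg
  obtain ⟨b', hb', a', ha', rfl⟩ := aux_supel (fun c (hc : c ∈ _ ⊓ B) b hb => hB c hc.2 b hb) hx
  have hbM : b ∈ B' ⊔ (A' ⊓ B) := (le_sup_left : B' ≤ _) hb
  have h1 : a * b' * a⁻¹ ∈ B' ⊔ (A' ⊓ B) := (le_sup_left : B' ≤ _) (hB a ha.2 b' hb')
  have h2 : a * a' * a⁻¹ ∈ B' ⊔ (A' ⊓ B) :=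
    (le_sup_right : A' ⊓ B ≤ _) ⟨hA a ha.1 a' ha'.1,
      B.mul_mem (B.mul_mem ha.2 ha'.2) (B.inv_mem ha.2)⟩
  have h3 := Subgroup.mul_mem _ (Subgroup.mul_mem _ hbM (Subgroup.mul_mem _ h1 h2))
    (Subgroup.inv_mem _ hbM)
  convert h3 using 1
  group

structure Ctx {G T : Type*} [Group G] (ι : T → Subgroup G) (I : T → Prop) (z o : T)
    (R : Subgroup G → Subgroup G → Prop) : Prop where
  inj : ∀ e f, I e → I f → ι e = ι f → e = f
  sup : ∀ e f, I e → I f → ∃ h, I h ∧ ι h = ι e ⊔ ι f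
  inf : ∀ e f, I e → I f → ∃ h, I h ∧ ι h = ι e ⊓ ι f
  Iz : I z
  Io : I o
  iz : ι z = ⊤
  io : ι o = ⊥
  le : ∀ A B, R A B → B ≤ A
  nm : ∀ A B, R A B → NormBy A B
  zass : ∀ A A' B B', R A A' → R B B' → R (B' ⊔ (A ⊓ B)) (B' ⊔ (A' ⊓ B))
  mid : ∀ A A' C, R A A' → R A C → A' ≤ C → R C A'
  bot : ∀ A A', R A A' → R A' ⊥
  tb : R ⊤ ⊥

def Ser {G T : Type*} [Group G] (ι : T → Subgroup G) (I : T → Prop) (z o : T)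
    (R : Subgroup G → Subgroup G → Prop) (n : ℕ) (c : ℕ → T) : Prop :=
  c 0 = z ∧ c n = o ∧ (∀ i ≤ n, I (c i)) ∧ ∀ i < n, R (ι (c i)) (ι (c (i + 1)))

def InSer {G T : Type*} [Group G] (ι : T → Subgroup G) (I : T → Prop) (z o : T)
    (R : Subgroup G → Subgroup G → Prop) (e : T) : Prop :=
  ∃ (n : ℕ) (c : ℕ → T), Ser ι I z o R n c ∧ ∃ i ≤ n, c i = e

variable {G T : Type*} [Group G] {ι : T → Subgroup G} {I : T → Prop} {z o : T}
    {R : Subgroup G → Subgroup G → Prop}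

theorem InSer.idem {e : T} (h : InSer ι I z o R e) : I e := by
  obtain ⟨n, c, hc, i, hi, rfl⟩ := h
  exact hc.2.2.1 i hi

theorem Ctx.z_in (C : Ctx ι I z o R) : InSer ι I z o R z := by
  refine ⟨1, fun k => if k = 0 then z else o, ⟨by simp, by simp, ?_, ?_⟩, 0, by simp, by simp⟩
  · intro i _
    by_cases h : i = 0 <;> simp [h, C.Iz, C.Io]
  · intro i hi
    obtain rfl : i = 0 := by omega
    simpa [C.iz, C.io] using C.tb

theorem Ctx.step_in (C : Ctx ι I z o R) {e f : T} (he : InSer ι I z o R e) (hf : I f)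
    (h : R (ι e) (ι f)) : InSer ι I z o R f := by
  obtain ⟨n, c, hc, i, hi, rfl⟩ := he
  refine ⟨i + 2, fun k => if k ≤ i then c k else if k = i + 1 then f else o,
    ⟨by simp [hc.1], by simp, ?_, ?_⟩, i + 1, by omega, by simp⟩
  · intro k hk
    dsimp only
    split_ifs
    · exact hc.2.2.1 k (by omega)
    · exact hf
    · exact C.Io
  · intro k hk
    dsimp only
    rcases lt_trichotomy k i with h1 | h1 | h1
    · rw [if_pos h1.le, if_pos (by omega)]
      exact hc.2.2.2 k (by omega)
    · subst h1
      simpa using h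
    · obtain rfl : k = i + 1 := by omega
      simpa [C.io] using C.bot _ _ h

theorem Ctx.anti (C : Ctx ι I z o R) {n : ℕ} {c : ℕ → T} (hc : Ser ι I z o R n c) {i j : ℕ}
    (hij : i ≤ j) (hj : j ≤ n) : ι (c j) ≤ ι (c i) := by
  induction j, hij using Nat.le_induction with
  | base => exact le_rfl
  | succ k hk ih => exact (C.le _ _ (hc.2.2.2 k (by omega))).trans (ih (by omega))

theorem Ctx.insert (C : Ctx ι I z o R) {n : ℕ} {c : ℕ → T}
    (hc : IsCompositionOf (Ser ι I z o R) n c) {j : ℕ} (hj : j < n) {h : T} (hI : I h)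
    (h1 : R (ι (c j)) (ι h)) (h2 : R (ι h) (ι (c (j + 1)))) : h = c j ∨ h = c (j + 1) := by
  obtain ⟨hs, -, hr⟩ := hc
  have := hr (n + 1) (fun k => if k ≤ j then c k else if k = j + 1 then h else c (k - 1)) ?_ ?_
    (j + 1) (by omega)
  · obtain ⟨k, hk, hkk⟩ := this
    simp at hkk
    have l1 := C.le _ _ h1
    have l2 := C.le _ _ h2
    rcases Nat.lt_or_ge j k with hjk | hjk
    · right
      apply C.inj _ _ hI (hs.2.2.1 _ hj)
      refine le_antisymm ?_ l2
      rw [hkk]; exact C.anti hs hjk hk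
    · left
      apply C.inj _ _ hI (hs.2.2.1 _ hj.le)
      refine le_antisymm l1 ?_
      rw [hkk]; exact C.anti hs hjk hj.le
  · refine ⟨by simp [hs.1], ?_, ?_, ?_⟩
    · try dsimp only
      rw [if_neg (by omega), if_neg (by omega)]
      exact hs.2.1
    · intro k hk
      dsimp only
      split_ifs
      · exact hs.2.2.1 k (by omega)
      · exact hI
      · exact hs.2.2.1 _ (by omega)
    · intro k hk
      try dsimp only
      rcases lt_trichotomy k j with h1 | h1 | h1
      · rw [if_pos h1.le, if_pos (by omega)]
        exact hs.2.2.2 k (by omega)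
      · subst h1
        simpa using by assumption
      · rcases Nat.eq_or_lt_of_le h1 with h3 | h3
        · obtain rfl : k = j + 1 := h3.symm
          simpa using h2
        · rw [if_neg (by omega), if_neg (by omega), if_neg (by omega), if_neg (by omega)]
          have := hs.2.2.2 (k - 1) (by omega)
          rwa [show k - 1 + 1 = k by omega] at this
  · intro i hi
    by_cases hij : i ≤ j
    · exact ⟨i, by omega, by simp [hij]⟩
    · refine ⟨i + 1, by omega, ?_⟩
      rw [if_neg (by omega), if_neg (by omega)]
      rfl

theorem Ctx.dich (C : Ctx ι I z o R) {n : ℕ} {c : ℕ → T}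
    (hc : IsCompositionOf (Ser ι I z o R) n c) {j : ℕ} (hj : j < n) {e : T}
    (he : InSer ι I z o R e) :
    ι (c (j + 1)) ⊔ (ι e ⊓ ι (c j)) = ι (c j) ∨
      ι (c (j + 1)) ⊔ (ι e ⊓ ι (c j)) = ι (c (j + 1)) := by
  have hR := hc.1.2.2.2 j hj
  have hle := C.le _ _ hR
  obtain ⟨m, d, hd, i, hi, rfl⟩ := he
  induction i with
  | zero => left; simp [hd.1, C.iz, hle]
  | succ i ih =>
    have hRd := hd.2.2.2 i hi
    have hled := C.le _ _ hRd
    rcases ih (by omega) with h | h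
    · have hz := C.zass _ _ _ _ hRd hR
      rw [h] at hz
      obtain ⟨p, hp, hpe⟩ := C.inf _ _ (hd.2.2.1 (i + 1) hi) (hc.1.2.2.1 j hj.le)
      obtain ⟨q, hq, hqe⟩ := C.sup _ _ (hc.1.2.2.1 (j + 1) hj) hp
      rw [hpe] at hqe
      have hm := C.mid _ _ _ hR hz le_sup_left
      rw [← hqe] at hz hm ⊢
      rcases C.insert hc hj hq hz hm with rfl | rfl
      · left; rfl
      · right; rfl
    · right
      refine le_antisymm ?_ le_sup_left
      calc _ ≤ _ := sup_le_sup_left (inf_le_inf_right _ hled) _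
        _ = _ := h

open Classical in
noncomputable def rk (ι : T → Subgroup G) (n : ℕ) (c : ℕ → T) (e : T) : ℕ :=
  ((Finset.range n).filter (fun j => ι (c (j + 1)) ⊔ (ι e ⊓ ι (c j)) = ι (c j))).card

theorem Ctx.rk_lt (C : Ctx ι I z o R) {n : ℕ} {c : ℕ → T}
    (hc : IsCompositionOf (Ser ι I z o R) n c) {e f : T}
    (he : InSer ι I z o R e) (hf : InSer ι I z o R f) (hle : ι e ≤ ι f) (hne : e ≠ f) :
    rk ι n c e < rk ι n c f := by
  classical
  have hs := hc.1
  apply Finset.card_lt_card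
  rw [Finset.ssubset_iff_subset_ne]
  have hsub : ∀ j < n, ι (c (j + 1)) ⊔ (ι e ⊓ ι (c j)) = ι (c j) →
      ι (c (j + 1)) ⊔ (ι f ⊓ ι (c j)) = ι (c j) := by
    intro j hj h
    refine le_antisymm (sup_le (C.le _ _ (hs.2.2.2 j hj)) inf_le_right) ?_
    calc _ = _ := h.symm
      _ ≤ _ := sup_le_sup_left (inf_le_inf_right _ hle) _
  refine ⟨?_, ?_⟩
  · intro j hj
    simp only [Finset.mem_filter, Finset.mem_range] at hj ⊢
    exact ⟨hj.1, hsub j hj.1 hj.2⟩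
  · intro heq
    apply hne
    apply C.inj _ _ he.idem hf.idem
    refine le_antisymm hle ?_
    have hM : ∀ j < n, ι (c (j + 1)) ⊔ (ι f ⊓ ι (c j)) ≤ ι (c (j + 1)) ⊔ (ι e ⊓ ι (c j)) := by
      intro j hj
      have := Finset.ext_iff.1 heq j
      simp only [Finset.mem_filter, Finset.mem_range, hj, true_and] at this
      rcases C.dich hc hj hf with h | h
      · rw [h, this.2 h]
      · rw [h]; exact le_sup_left
    have key : ∀ k ≤ n, ι (c (n - k)) ⊓ ι f ≤ ι e := by
      intro k
      induction k with
      | zero => intro _; simp [hs.2.1, C.io]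
      | succ k ih =>
        intro hk x hx
        have hj : n - (k + 1) < n := by omega
        have hkk : n - (k + 1) + 1 = n - k := by omega
        have h1 := hM _ hj ((le_sup_right : _ ≤ ι (c (n - (k+1) + 1)) ⊔ (ι f ⊓ ι (c (n - (k+1)))))
          ⟨hx.2, hx.1⟩)
        obtain ⟨b, hb, y, hy, rfl⟩ := aux_supel
          (fun c (hc : c ∈ ι e ⊓ _) b hb => C.nm _ _ (hs.2.2.2 _ hj) c hc.2 b hb) h1
        rw [hkk] at hb
        refine Subgroup.mul_mem _ (ih (by omega) ⟨hb, ?_⟩) hy.1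
        have := Subgroup.mul_mem _ hx.2 (Subgroup.inv_mem _ (hle hy.1))
        simpa using this
    have := key n le_rfl
    simpa [hs.1, C.iz] using this

/-- `f` is a maximal proper step from `e`. -/
def Next (ι : T → Subgroup G) (I : T → Prop) (z o : T)
    (R : Subgroup G → Subgroup G → Prop) (e f : T) : Prop :=
  R (ι e) (ι f) ∧ f ≠ e ∧ ∀ f', InSer ι I z o R f' → R (ι e) (ι f') → f' ≠ e → ι f ≤ ι f' → f' = f

theorem wf_of {X : T → Prop} {r : T → T → Prop}
    (h : ¬ ∃ f : ℕ → T, (∀ k, X (f k)) ∧ ∀ k, r (f (k + 1)) (f k)) :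
    WellFounded (fun a b : {e // X e} => r a.1 b.1) := by
  rw [wellFounded_iff_isEmpty_descending_chain]
  refine ⟨fun f => h ⟨fun k => (f.1 k).1, fun k => (f.1 k).2, fun k => f.2 k⟩⟩

theorem Ctx.main (C : Ctx ι I z o R) :
    (∃ (n : ℕ) (c : ℕ → T), IsCompositionOf (Ser ι I z o R) n c) ↔
    ((¬ ∃ f : ℕ → T, (∀ k, InSer ι I z o R (f k)) ∧
          ∀ k, ι (f (k + 1)) ≤ ι (f k) ∧ f k ≠ f (k + 1)) ∧
       (¬ ∃ f : ℕ → T, (∀ k, InSer ι I z o R (f k)) ∧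
          ∀ k, ι (f k) ≤ ι (f (k + 1)) ∧ f (k + 1) ≠ f k)) := by
  constructor
  · rintro ⟨n, c, hc⟩
    constructor
    · rintro ⟨f, hf, hk⟩
      have h1 : ∀ k, rk ι n c (f k) + k ≤ rk ι n c (f 0) := by
        intro k
        induction k with
        | zero => simp
        | succ k ih =>
          have := C.rk_lt hc (hf _) (hf _) (hk k).1 (hk k).2.symm
          omega
      have := h1 (rk ι n c (f 0) + 1)
      omega
    · rintro ⟨f, hf, hk⟩
      have h1 : ∀ k, k ≤ rk ι n c (f k) := by
        intro k
        induction k with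
        | zero => simp
        | succ k ih =>
          have := C.rk_lt hc (hf _) (hf _) (hk k).1 (hk k).2.symm
          omega
      have h2 : rk ι n c (f (n + 1)) ≤ n := by
        classical
        exact (Finset.card_filter_le _ _).trans (by simp)
      have := h1 (n + 1)
      omega
  · rintro ⟨hacc, hdcc⟩
    have wa := wf_of (r := fun a b => ι a ≤ ι b ∧ b ≠ a) hacc
    have wd := wf_of (r := fun a b => ι b ≤ ι a ∧ a ≠ b) hdcc
    have next : ∀ e, InSer ι I z o R e → e ≠ o → ∃ f, InSer ι I z o R f ∧ Next ι I z o R e f := by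
      intro e he hne
      have hRo : R (ι e) (ι o) := by
        obtain ⟨n, c, hc, i, hi, rfl⟩ := he
        rw [C.io]
        rcases i with _ | i
        · rw [hc.1, C.iz]; exact C.tb
        · exact C.bot _ _ (hc.2.2.2 i hi)
      obtain ⟨f, hf, hmin⟩ := wd.has_min {f | R (ι e) (ι f.1) ∧ f.1 ≠ e}
        ⟨⟨o, C.step_in he C.Io hRo⟩, hRo, hne.symm⟩
      refine ⟨f.1, f.2, hf.1, hf.2, fun f' h1 h2 h3 h4 => ?_⟩
      by_contra h5
      exact hmin ⟨f', h1⟩ ⟨h2, h3⟩ ⟨h4, h5⟩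
    have chain : ∀ e : {e // InSer ι I z o R e}, ∃ (n : ℕ) (c : ℕ → T), c 0 = e.1 ∧ c n = o ∧
        (∀ i ≤ n, InSer ι I z o R (c i)) ∧ ∀ i < n, Next ι I z o R (c i) (c (i + 1)) := by
      intro e
      induction e using wa.induction with
      | _ e ih =>
        by_cases heo : e.1 = o
        · exact ⟨0, fun _ => e.1, rfl, heo, fun _ _ => e.2, fun i hi => by omega⟩
        · obtain ⟨f, hf, hn⟩ := next e.1 e.2 heo
          obtain ⟨n, c, h0, h1, h2, h3⟩ := ih ⟨f, hf⟩ ⟨C.le _ _ hn.1, hn.2.1.symm⟩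
          refine ⟨n + 1, fun k => Nat.casesOn k e.1 c, rfl, h1, ?_, ?_⟩
          · rintro (_ | i) hi
            · exact e.2
            · exact h2 i (by omega)
          · rintro (_ | i) hi
            · simpa [h0] using hn
            · exact h3 i (by omega)
    obtain ⟨n, c, h0, h1, h2, h3⟩ := chain ⟨z, C.z_in⟩
    have hs : Ser ι I z o R n c := ⟨h0, h1, fun i hi => (h2 i hi).idem, fun i hi => (h3 i hi).1⟩
    have hinj : ∀ i j, i < j → j ≤ n → c i ≠ c j := by
      intro i j hij hj heq
      have l1 : ι (c j) ≤ ι (c (i + 1)) := C.anti hs hij hj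
      rw [← heq] at l1
      exact (h3 i (by omega)).2.1 (C.inj _ _ (h2 _ (by omega)).idem (h2 _ (by omega)).idem
        (le_antisymm (C.le _ _ (h3 i (by omega)).1) l1))
    refine ⟨n, c, hs, ?_, ?_⟩
    · intro i hi j hj heq
      rcases lt_trichotomy i j with h | h | h
      · exact absurd heq (hinj i j h hj)
      · exact h
      · exact absurd heq.symm (hinj j i h hi)
    · intro m d hd href j hj
      classical
      have hdX : ∀ q ≤ m, InSer ι I z o R (d q) := fun q hq => ⟨m, d, hd, q, hq, rfl⟩
      set i := Nat.findGreatest (fun i => ι (d j) ≤ ι (c i)) n with hi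
      have hin : i ≤ n := Nat.findGreatest_le n
      have hP : ι (d j) ≤ ι (c i) :=
        Nat.findGreatest_spec (P := fun i => ι (d j) ≤ ι (c i)) (Nat.zero_le n)
          (by simp [hs.1, C.iz])
      refine ⟨i, hin, ?_⟩
      rcases Nat.eq_or_lt_of_le hin with h | h
      · rw [h, h1] at hP ⊢
        rw [C.io] at hP
        exact C.inj _ _ (hdX j hj).idem C.Io (by rw [C.io]; exact le_antisymm hP bot_le)
      · have hN : ¬ ι (d j) ≤ ι (c (i + 1)) :=
          Nat.findGreatest_is_greatest (P := fun i => ι (d j) ≤ ι (c i))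
            (Nat.lt_succ_self i) h
        have hlow : ι (c (i + 1)) ≤ ι (d j) := by
          obtain ⟨q, hq, hqe⟩ := href (i + 1) h
          rw [← hqe] at hN ⊢
          rcases le_total q j with hqj | hqj
          · exact absurd (C.anti hd hqj hj) hN
          · exact C.anti hd hqj hq
        obtain ⟨p, hp, hpe⟩ := href i hin
        rcases le_total p j with hpj | hpj
        · have : ∀ q, p ≤ q → q ≤ j → d q = c i := by
            intro q hq
            induction q, hq using Nat.le_induction with
            | base => intro _; exact hpe
            | succ q hq ih =>
              intro hqj
              have e1 := ih (by omega)
              by_contra hne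
              have hR := hd.2.2.2 q (by omega)
              rw [e1] at hR
              have l := C.anti hd hqj hj
              have := (h3 i h).2.2 _ (hdX (q + 1) (by omega)) hR hne (hlow.trans l)
              rw [this] at l
              exact hN l
          exact this j hpj le_rfl
        · apply C.inj _ _ (hdX j hj).idem (h2 i hin).idem
          refine le_antisymm hP ?_
          rw [← hpe]; exact C.anti hd hpj hp

end Generic

section Inverse

variable {S : Type*} [InverseMonoidWithZero S]

theorem idem_mul_idem {e f : S} (he : IsIdempotentElem e) (hf : IsIdempotentElem f) :
    IsIdempotentElem (e * f) := by
  have he' : ∀ t, e * (e * t) = e * t := fun t => by rw [← mul_assoc, he.eq]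
  have hf' : ∀ t, f * (f * t) = f * t := fun t => by rw [← mul_assoc, hf.eq]
  have a1 := InverseMonoid.mul_inv_mul (e * f)
  have a2 := InverseMonoid.inv_mul_inv (e * f)
  have a3 := InverseMonoid.inv_unique (e * f)
  generalize (e * f)⁻¹ = x at a1 a2 a3
  simp only [mul_assoc] at a1 a2
  have a2' : ∀ t, x * (e * (f * (x * t))) = x * t := fun t => by
    conv_rhs => rw [← a2]
    simp only [mul_assoc]
  have hx : f * x * e = x := by
    apply a3
    · simp only [mul_assoc, he', hf', a1]
    · simp only [mul_assoc, he', hf', a2']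
  have hxx : x * x = x := by
    have : (f * x * e) * (f * x * e) = f * x * e := by
      simp only [mul_assoc, a2']
    rwa [hx] at this
  have b1 := InverseMonoid.inv_unique x x (by rw [hxx, hxx]) (by rw [hxx, hxx])
  have b2 := InverseMonoid.inv_unique x (e * f) (by simpa only [mul_assoc] using a2)
    (by simpa only [mul_assoc] using a1)
  rw [b2, ← b1]; exact hxx

theorem idem_comm {e f : S} (he : IsIdempotentElem e) (hf : IsIdempotentElem f) :
    e * f = f * e := by
  have h1 := (idem_mul_idem he hf).eq
  have h2 := (idem_mul_idem hf he).eq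
  have he' : ∀ t, e * (e * t) = e * t := fun t => by rw [← mul_assoc, he.eq]
  have hf' : ∀ t, f * (f * t) = f * t := fun t => by rw [← mul_assoc, hf.eq]
  have b1 := InverseMonoid.inv_unique (e * f) (e * f) (by rw [h1, h1]) (by rw [h1, h1])
  have b2 := InverseMonoid.inv_unique (e * f) (f * e)
    (by simp only [mul_assoc, he', hf'] at *; exact h1)
    (by simp only [mul_assoc, he', hf'] at *; exact h2)
  rw [b1, ← b2]

theorem idem_zero : IsIdempotentElem (0 : S) := InverseMonoidWithZero.zero_mul 0

theorem mem_natconn {e : S} {g : Sˣ} : g ∈ natconn e ↔ e * (g : S) = e := Iff.rfl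

theorem idem_conj {e : S} (he : IsIdempotentElem e) (g : Sˣ) :
    IsIdempotentElem ((g : S) * e * ((g⁻¹ : Sˣ) : S)) := by
  unfold IsIdempotentElem
  simp only [mul_assoc, Units.inv_mul_cancel_left]
  rw [← mul_assoc e e, he.eq]

theorem mem_natconn_conj {e : S} {g h : Sˣ} :
    h ∈ natconn ((g : S) * e * ((g⁻¹ : Sˣ) : S)) ↔ g⁻¹ * h * g ∈ natconn e := by
  rw [mem_natconn, mem_natconn]
  simp only [Units.val_mul, mul_assoc, Units.mul_right_inj]
  constructor
  · intro H
    have := congrArg (· * (g : S)) H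
    simpa [mul_assoc] using this
  · intro H
    have := congrArg (· * ((g⁻¹ : Sˣ) : S)) H
    simpa [mul_assoc] using this

theorem comm_of_norm (hθ : NatconnDualIso S) {A : Subgroup Sˣ} {e : S} (he : IsIdempotentElem e)
    (h : NormBy A (natconn e)) {g : Sˣ} (hg : g ∈ A) : e * (g : S) = g * e := by
  have h1 : natconn ((g : S) * e * ((g⁻¹ : Sˣ) : S)) = natconn e := by
    ext x
    rw [mem_natconn_conj]
    constructor
    · intro hx
      have := h g hg _ hx
      simpa [mul_assoc] using this
    · intro hx
      have := h g⁻¹ (A.inv_mem hg) _ hx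
      simpa [mul_assoc] using this
  have h2 := hθ.1 _ _ (idem_conj he g) he h1
  conv_lhs => rw [← h2]
  simp [mul_assoc]

theorem norm_of_comm {A : Subgroup Sˣ} {e : S}
    (h : ∀ g ∈ A, e * (g : S) = g * e) : NormBy A (natconn e) := by
  intro g hg x hx
  rw [mem_natconn] at hx ⊢
  simp only [Units.val_mul]
  rw [← mul_assoc, ← mul_assoc, h g hg, mul_assoc (g : S), hx, ← h g hg, mul_assoc]
  simp

/-- structure of the filter -/
theorem upfilter_decomp (hfact : Factorizable S) {e s : S} (he : IsIdempotentElem e)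
    (hs : s ∈ upfilter e) :
    ∃ f : S, ∃ g ∈ natconn e, IsIdempotentElem f ∧ s = f * ((g : Sˣ) : S) := by
  obtain ⟨f, g, hf, ⟨u, rfl⟩, rfl⟩ := hfact s
  obtain ⟨p, hp, hpe⟩ := hs
  refine ⟨f, u, ?_, hf, rfl⟩
  rw [mem_natconn]
  set q := p * f with hq
  have hqi : IsIdempotentElem q := idem_mul_idem hp hf
  have h1 : e = q * (u : S) := by rw [hpe, hq, mul_assoc]
  have h2 : q * e = e := by rw [h1, ← mul_assoc, hqi.eq]
  have h3 : q = e * ((u⁻¹ : Sˣ) : S) := by rw [h1]; simp [mul_assoc]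
  have h4 : e * q = q := by
    conv_lhs => rw [h3]
    rw [← mul_assoc, he.eq, ← h3]
  have h5 : e = q := by rw [← h2, idem_comm hqi he, h4]
  conv_lhs => rw [h5]
  exact h1.symm

theorem central_filter_iff (hfact : Factorizable S) (hθ : NatconnDualIso S) {e c : S}
    (he : IsIdempotentElem e) (hc : IsIdempotentElem c) :
    CentralIn (upfilter e) c ↔ natconn c ≤ natconn e ∧ NormBy (natconn e) (natconn c) := by
  constructor
  · rintro ⟨h1, h2⟩
    refine ⟨(hθ.2.1 e c he hc).1 h1, norm_of_comm fun g hg => h2 _ ⟨e, he, ?_⟩⟩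
    exact (mem_natconn.1 hg).symm
  · rintro ⟨h1, h2⟩
    refine ⟨(hθ.2.1 e c he hc).2 h1, fun s hs => ?_⟩
    obtain ⟨f, g, hg, hf, rfl⟩ := upfilter_decomp hfact he hs
    rw [← mul_assoc, idem_comm hc hf, mul_assoc, comm_of_norm hθ hc h2 hg, mul_assoc]

theorem central_univ_iff (hfact : Factorizable S) (hθ : NatconnDualIso S) {c : S}
    (hc : IsIdempotentElem c) :
    CentralIn Set.univ c ↔ NormBy ⊤ (natconn c) := by
  constructor
  · rintro ⟨-, h2⟩
    exact norm_of_comm fun g _ => h2 _ trivial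
  · intro h2
    refine ⟨trivial, fun s _ => ?_⟩
    obtain ⟨f, g, hf, ⟨u, rfl⟩, rfl⟩ := hfact s
    rw [← mul_assoc, idem_comm hc hf, mul_assoc, comm_of_norm hθ hc h2 (Subgroup.mem_top u),
      mul_assoc]

theorem natconn_zero : natconn (0 : S) = ⊤ := by
  ext g; simp [mem_natconn, InverseMonoidWithZero.zero_mul]

theorem natconn_one : natconn (1 : S) = ⊥ := by
  ext g; simp [mem_natconn, Subgroup.mem_bot]

theorem normBy_bot {G : Type*} [Group G] (A : Subgroup G) : NormBy A ⊥ := by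
  intro g _ x hx
  rw [Subgroup.mem_bot] at *
  simp [hx]

theorem normBy_top {G : Type*} [Group G] {A : Subgroup G} : NormBy A ⊤ :=
  fun _ _ _ _ => trivial

theorem NormBy.mono {G : Type*} [Group G] {A B C : Subgroup G} (h : NormBy A B) (hc : C ≤ A) :
    NormBy C B := fun g hg => h g (hc hg)

theorem ctx_sub (hθ : NatconnDualIso S) :
    Ctx (natconn : S → Subgroup Sˣ) IsIdempotentElem 0 1 (fun A B => B ≤ A ∧ NormBy A B) where
  inj := hθ.1
  sup := fun e f he hf => (hθ.2.2 e f he hf).1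
  inf := fun e f he hf => (hθ.2.2 e f he hf).2
  Iz := idem_zero
  Io := IsIdempotentElem.one
  iz := natconn_zero
  io := natconn_one
  le := fun _ _ h => h.1
  nm := fun _ _ h => h.2
  zass := fun _ _ _ _ h1 h2 =>
    ⟨sup_le_sup_left (inf_le_inf_right _ h1.1) _, aux_zass h1.2 h2.2⟩
  mid := fun _ _ _ h1 h2 h3 => ⟨h3, h1.2.mono h2.1⟩
  bot := fun _ _ _ => ⟨bot_le, normBy_bot _⟩
  tb := ⟨bot_le, normBy_bot _⟩

theorem normBy_top_sup {G : Type*} [Group G] {A B : Subgroup G} (hA : NormBy ⊤ A)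
    (hB : NormBy ⊤ B) : NormBy ⊤ (A ⊔ B) := by
  have := aux_zass (A := ⊤) (A' := B) (B := ⊤) (B' := A) hB hA
  simpa using this

theorem normBy_top_inf {G : Type*} [Group G] {A B : Subgroup G} (hA : NormBy ⊤ A)
    (hB : NormBy ⊤ B) : NormBy ⊤ (A ⊓ B) :=
  fun g hg x hx => ⟨hA g hg x hx.1, hB g hg x hx.2⟩

theorem ctx_cen (hθ : NatconnDualIso S) :
    Ctx (natconn : S → Subgroup Sˣ) IsIdempotentElem 0 1
      (fun A B => B ≤ A ∧ NormBy ⊤ A ∧ NormBy ⊤ B) where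
  inj := hθ.1
  sup := fun e f he hf => (hθ.2.2 e f he hf).1
  inf := fun e f he hf => (hθ.2.2 e f he hf).2
  Iz := idem_zero
  Io := IsIdempotentElem.one
  iz := natconn_zero
  io := natconn_one
  le := fun _ _ h => h.1
  nm := fun _ _ h => h.2.2.mono le_top
  zass := fun _ _ _ _ h1 h2 =>
    ⟨sup_le_sup_left (inf_le_inf_right _ h1.1) _,
      normBy_top_sup h2.2.2 (normBy_top_inf h1.2.1 h2.2.1),
      normBy_top_sup h2.2.2 (normBy_top_inf h1.2.2 h2.2.1)⟩
  mid := fun _ _ _ h1 h2 h3 => ⟨h3, h2.2.2, h1.2.2⟩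
  bot := fun _ _ h => ⟨bot_le, h.2.2, normBy_bot _⟩
  tb := ⟨bot_le, normBy_top, normBy_bot _⟩

theorem ser_sub (hfact : Factorizable S) (hθ : NatconnDualIso S) :
    (IsSubcentralSeries : ℕ → (ℕ → S) → Prop) =
      Ser natconn IsIdempotentElem 0 1 (fun A B => B ≤ A ∧ NormBy A B) := by
  funext n c
  apply propext
  unfold IsSubcentralSeries IsSubcentralSeriesBetween Ser
  refine and_congr_right fun _ => and_congr_right fun _ => and_congr_right fun hI =>
    forall_congr' fun i => forall_congr' fun hi => ?_
  exact central_filter_iff hfact hθ (hI i hi.le) (hI (i + 1) hi)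

theorem ser_cen (hfact : Factorizable S) (hθ : NatconnDualIso S) :
    (IsCentralSeries : ℕ → (ℕ → S) → Prop) =
      Ser natconn IsIdempotentElem 0 1 (fun A B => B ≤ A ∧ NormBy ⊤ A ∧ NormBy ⊤ B) := by
  funext n c
  apply propext
  unfold IsCentralSeries Ser
  refine and_congr_right fun h0 => and_congr_right fun _ => and_congr_right fun hI => ?_
  constructor
  · rintro ⟨h1, h2⟩ i hi
    refine ⟨(hθ.2.1 _ _ (hI i hi.le) (hI _ hi)).1 (h1 i hi), ?_,
      (central_univ_iff hfact hθ (hI _ hi)).1 (h2 i hi)⟩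
    rcases i with _ | i
    · rw [h0, natconn_zero]; exact normBy_top
    · exact (central_univ_iff hfact hθ (hI _ hi.le)).1 (h2 i (by omega))
  · intro h
    exact ⟨fun i hi => (hθ.2.1 _ _ (hI i hi.le) (hI _ hi)).2 (h i hi).1,
      fun i hi => (central_univ_iff hfact hθ (hI _ hi)).2 (h i hi).2.2⟩

theorem in_cen (hfact : Factorizable S) (hθ : NatconnDualIso S) (e : S) :
    (IsIdempotentElem e ∧ CentralIn Set.univ e) ↔
      InSer natconn IsIdempotentElem 0 1 (fun A B => B ≤ A ∧ NormBy ⊤ A ∧ NormBy ⊤ B) e := by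
  constructor
  · rintro ⟨h1, h2⟩
    have h3 := (central_univ_iff hfact hθ h1).1 h2
    refine (ctx_cen hθ).step_in (ctx_cen hθ).z_in h1 ?_
    rw [natconn_zero]
    exact ⟨le_top, normBy_top, h3⟩
  · intro h
    refine ⟨h.idem, (central_univ_iff hfact hθ h.idem).2 ?_⟩
    obtain ⟨n, c, hc, i, hi, rfl⟩ := h
    rcases i with _ | i
    · rw [hc.1, natconn_zero]; exact normBy_top
    · exact (hc.2.2.2 i hi).2.2

theorem chains (hθ : NatconnDualIso S) {X Y : S → Prop} (hXY : ∀ e, X e ↔ Y e)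
    (hX : ∀ e, Y e → IsIdempotentElem e) :
    ((¬ ∃ f : ℕ → S, (∀ k, X (f k)) ∧
          ∀ k, NatLe (f k) (f (k + 1)) ∧ f k ≠ f (k + 1)) ∧
       (¬ ∃ f : ℕ → S, (∀ k, X (f k)) ∧
          ∀ k, NatLe (f (k + 1)) (f k) ∧ f (k + 1) ≠ f k)) ↔
    ((¬ ∃ f : ℕ → S, (∀ k, Y (f k)) ∧
          ∀ k, natconn (f (k + 1)) ≤ natconn (f k) ∧ f k ≠ f (k + 1)) ∧
       (¬ ∃ f : ℕ → S, (∀ k, Y (f k)) ∧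
          ∀ k, natconn (f k) ≤ natconn (f (k + 1)) ∧ f (k + 1) ≠ f k)) := by
  simp only [hXY]
  refine and_congr (not_congr (exists_congr fun f => and_congr_right fun h =>
    forall_congr' fun k => and_congr_left fun _ => ?_))
    (not_congr (exists_congr fun f => and_congr_right fun h =>
    forall_congr' fun k => and_congr_left fun _ => ?_))
  · exact hθ.2.1 _ _ (hX _ (h _)) (hX _ (h _))
  · exact hθ.2.1 _ _ (hX _ (h _)) (hX _ (h _))

end Inverse

/-- In a factorizable inverse monoid with zero whose natural connection
is a dual isomorphism onto a sublattice of the lattice of subgroups of the group of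
units, `S` has a composition subcentral (resp. composition central) idempotent series
iff the poset `E_sc` of subcentral idempotents (resp. `E_c` of central idempotents)
satisfies the ascending and descending chain conditions. -/
theorem stmt_10 {S : Type*} [InverseMonoidWithZero S] (hfact : Factorizable S)
    (hθ : NatconnDualIso S) :
    ((∃ (n : ℕ) (c : ℕ → S), IsCompositionOf IsSubcentralSeries n c) ↔
      ((¬ ∃ f : ℕ → S, (∀ k, IsSubcentralIdem (f k)) ∧
          ∀ k, NatLe (f k) (f (k + 1)) ∧ f k ≠ f (k + 1)) ∧
       (¬ ∃ f : ℕ → S, (∀ k, IsSubcentralIdem (f k)) ∧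
          ∀ k, NatLe (f (k + 1)) (f k) ∧ f (k + 1) ≠ f k))) ∧
    ((∃ (n : ℕ) (c : ℕ → S), IsCompositionOf IsCentralSeries n c) ↔
      ((¬ ∃ f : ℕ → S, (∀ k, IsIdempotentElem (f k) ∧ CentralIn Set.univ (f k)) ∧
          ∀ k, NatLe (f k) (f (k + 1)) ∧ f k ≠ f (k + 1)) ∧
       (¬ ∃ f : ℕ → S, (∀ k, IsIdempotentElem (f k) ∧ CentralIn Set.univ (f k)) ∧
          ∀ k, NatLe (f (k + 1)) (f k) ∧ f (k + 1) ≠ f k))) := by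
  refine ⟨?_, ?_⟩
  · rw [chains hθ (Y := InSer natconn IsIdempotentElem 0 1 (fun A B => B ≤ A ∧ NormBy A B))
      (fun e => by unfold IsSubcentralIdem InSer; rw [ser_sub hfact hθ]) (fun e h => h.idem),
      ser_sub hfact hθ]
    exact (ctx_sub hθ).main
  · rw [chains hθ (X := fun e => IsIdempotentElem e ∧ CentralIn Set.univ e)
      (in_cen hfact hθ) (fun e h => h.idem), ser_cen hfact hθ]
    exact (ctx_cen hθ).main
end

section
/- Let S be a factorizable inverse monoid with zero, with semilattice of idempotents E and group of units G, such that the natural connection θ is a dual isomorphism from E onto a sublattice of L(G). If S is G-nilpotent, then: (i) every idempotent f ∈ E is subcentral in S; (ii) for every idempotent f ∈ E with f ≠ 0 there exists an idempotent e < f such that f is central in e↑; (iii) every 0-minimal idempotent of S is central in S. -/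
section Aux

theorem aux_idem_mul {S : Type*} [InverseMonoid S] {e f : S} (he : IsIdempotentElem e)
    (hf : IsIdempotentElem f) : IsIdempotentElem (e * f) := by
  have he' : ∀ z, e * (e * z) = e * z := fun z => by rw [← mul_assoc, he.eq]
  have hf' : ∀ z, f * (f * z) = f * z := fun z => by rw [← mul_assoc, hf.eq]
  have h1 := InverseMonoid.mul_inv_mul (e * f)
  have h2 := InverseMonoid.inv_mul_inv (e * f)
  have huniq := InverseMonoid.inv_unique (e * f)
  generalize (e * f)⁻¹ = x at *
  have h3 : f * x * e = x := by
    apply huniq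
    · simp only [mul_assoc, he', hf'] at h1 ⊢
      exact h1
    · have h2' : ∀ z, x * (e * (f * (x * z))) = x * z := fun z => by
        have := congrArg (· * z) h2
        simpa only [mul_assoc] using this
      simp only [mul_assoc, he', hf', h2']
  have h4 : x * x = x := by
    have h2' : x * (e * (f * (x * e))) = x * e := by
      have := congrArg (· * e) h2
      simpa only [mul_assoc] using this
    calc x * x = (f * x * e) * (f * x * e) := by rw [h3]
      _ = f * (x * (e * (f * (x * e)))) := by simp only [mul_assoc]
      _ = f * x * e := by rw [h2', mul_assoc]
      _ = x := h3
  have h5 : e * f = x⁻¹ := InverseMonoid.inv_unique x (e * f) h2 h1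
  have h6 : x = x⁻¹ := InverseMonoid.inv_unique x x (by rw [h4, h4]) (by rw [h4, h4])
  rw [h5, ← h6]
  exact h4

theorem aux_idem_comm {S : Type*} [InverseMonoid S] {e f : S} (he : IsIdempotentElem e)
    (hf : IsIdempotentElem f) : e * f = f * e := by
  have he' : ∀ z, e * (e * z) = e * z := fun z => by rw [← mul_assoc, he.eq]
  have hf' : ∀ z, f * (f * z) = f * z := fun z => by rw [← mul_assoc, hf.eq]
  have h1 := (aux_idem_mul he hf).eq
  have h2 := (aux_idem_mul hf he).eq
  have h3 : f * e = (e * f)⁻¹ := by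
    apply InverseMonoid.inv_unique
    · simp only [mul_assoc, he', hf'] at h1 ⊢
      exact h1
    · simp only [mul_assoc, he', hf'] at h2 ⊢
      exact h2
  have h4 : e * f = (e * f)⁻¹ :=
    InverseMonoid.inv_unique _ _ (by rw [h1, h1]) (by rw [h1, h1])
  rw [h4, ← h3]

theorem aux_mem {S : Type*} [Monoid S] (e : S) (g : Sˣ) :
    g ∈ natconn e ↔ e * (g : S) = e := Iff.rfl

/-- If `f` is above `e` and `natconn e` normalizes `natconn f`, then `f` is central in `e↑`. -/
theorem aux_central {S : Type*} [InverseMonoid S] (hfact : Factorizable S)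
    (hθ : NatconnDualIso S) {e f : S} (he : IsIdempotentElem e) (hf : IsIdempotentElem f)
    (hle : natconn f ≤ natconn e) (hn : natconn e ≤ Subgroup.normalizer (natconn f : Set Sˣ)) :
    CentralIn (upfilter e) f := by
  refine ⟨(hθ.2.1 e f he hf).2 hle, ?_⟩
  rintro s ⟨k, hk, hks⟩
  obtain ⟨a, _, ha, ⟨g, rfl⟩, rfl⟩ := hfact s
  have hka := aux_idem_mul hk ha
  rw [← mul_assoc] at hks
  set p := k * a with hp
  have hpe : p * e = e := by rw [hks, ← mul_assoc, hka.eq]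
  have hpg : p = e * ((g⁻¹ : Sˣ) : S) := by
    rw [hks, mul_assoc, Units.mul_inv, mul_one]
  have hep : e * p = p := by
    rw [hpg, ← mul_assoc, he.eq]
  have hpe2 : p = e := by rw [← hep, aux_idem_comm he hka, hpe]
  have hg : g ∈ natconn e := by
    rw [aux_mem]
    rw [hpe2] at hks
    exact hks.symm
  have hgn := Subgroup.mem_normalizer_iff.1 (hn hg)
  have hfi : IsIdempotentElem ((g : S) * f * ((g⁻¹ : Sˣ) : S)) := by
    unfold IsIdempotentElem
    calc (g : S) * f * ((g⁻¹ : Sˣ) : S) * ((g : S) * f * ((g⁻¹ : Sˣ) : S))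
        = (g : S) * f * (((g⁻¹ : Sˣ) : S) * (g : S)) * f * ((g⁻¹ : Sˣ) : S) := by
          simp only [mul_assoc]
      _ = (g : S) * (f * f) * ((g⁻¹ : Sˣ) : S) := by
          rw [Units.inv_mul, mul_one]; simp only [mul_assoc]
      _ = _ := by rw [hf.eq]
  have hconj : (g : S) * f * ((g⁻¹ : Sˣ) : S) = f := by
    apply hθ.1 _ _ hfi hf
    ext x
    have hx : x ∈ natconn f ↔ g⁻¹ * x * g ∈ natconn f := by
      rw [hgn (g⁻¹ * x * g)]
      simp [mul_assoc]
    rw [hx, aux_mem, aux_mem]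
    simp only [Units.val_mul]
    constructor
    · intro h
      have := congrArg (fun z => ((g⁻¹ : Sˣ) : S) * z * (g : S)) h
      simpa [mul_assoc] using this
    · intro h
      have := congrArg (fun z => (g : S) * z * ((g⁻¹ : Sˣ) : S)) h
      simpa [mul_assoc] using this
  have hfg : f * (g : S) = (g : S) * f := by
    conv_lhs => rw [← hconj]
    rw [mul_assoc, Units.inv_mul, mul_one]
  rw [← mul_assoc, aux_idem_comm hf ha, mul_assoc, hfg, mul_assoc]

theorem aux_series {S : Type*} [InverseMonoidWithZero S] (hfact : Factorizable S)
    (hθ : NatconnDualIso S) (hnil : GNilpotent S) (f : S) (hf : IsIdempotentElem f) :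
    ∃ (n : ℕ) (h : ℕ → S), IsSubcentralSeriesBetween n h f := by
  obtain ⟨n, c, c0, cn, cc, cle, cF⟩ := hnil
  have hex : ∀ i, ∃ h : S, i ≤ n → IsIdempotentElem h ∧
      natconn h = natconn f ⊔ natconn (c i) := fun i => by
    by_cases hi : i ≤ n
    · obtain ⟨h, hh⟩ := (hθ.2.2 f (c i) hf (cc i hi).1).1
      exact ⟨h, fun _ => hh⟩
    · exact ⟨f, fun h => absurd h hi⟩
  choose h hh using hex
  have z0 : IsIdempotentElem (0 : S) := InverseMonoidWithZero.zero_mul 0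
  refine ⟨n, h, ?_, ?_, fun i hi => (hh i hi).1, ?_⟩
  · apply hθ.1 _ _ (hh 0 (Nat.zero_le _)).1 z0
    have : natconn (0 : S) = ⊤ := by
      rw [eq_top_iff]
      intro g _
      exact InverseMonoidWithZero.zero_mul _
    rw [(hh 0 (Nat.zero_le _)).2, c0, this, sup_top_eq]
  · apply hθ.1 _ _ (hh n le_rfl).1 hf
    have : natconn (1 : S) = ⊥ := by
      rw [eq_bot_iff]
      intro g hg
      rw [aux_mem, one_mul] at hg
      exact Subgroup.mem_bot.2 (Units.ext hg)
    rw [(hh n le_rfl).2, cn, this, sup_bot_eq]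
  · intro i hi
    obtain ⟨hi1, hi2⟩ := hh i hi.le
    obtain ⟨hj1, hj2⟩ := hh (i + 1) hi
    have ce := (cc (i + 1) hi).1
    have ccen := (cc (i + 1) hi).2.2
    apply aux_central hfact hθ hi1 hj1
    · rw [hi2, hj2]
      exact sup_le_sup_left ((hθ.2.1 _ _ (cc i hi.le).1 ce).1 (cle i hi)) _
    · rw [hi2]
      apply sup_le
      · exact le_trans (hj2 ▸ le_sup_left) Subgroup.le_normalizer
      · intro x hx
        have key : ∀ y : Sˣ, x * y * x⁻¹ * y⁻¹ ∈ natconn (h (i + 1)) := by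
          intro y
          have hle : natconn (c (i + 1)) ≤ natconn (h (i + 1)) := hj2 ▸ le_sup_right
          apply hle
          have h1 : c (i + 1) * (x : S) ∈ Fef (c i) (c (i + 1)) :=
            ⟨x, ⟨c i, (cc i hi.le).1, ((aux_mem _ _).1 hx).symm⟩, rfl⟩
          have h2 : c (i + 1) * (y : S) ∈ Fef 0 (c (i + 1)) :=
            ⟨y, ⟨0, z0, (InverseMonoidWithZero.zero_mul _).symm⟩, rfl⟩
          have h3 := (cF i hi h1).2 _ h2
          have h4 : ∀ a b : S, c (i + 1) * a * (c (i + 1) * b) = c (i + 1) * (a * b) := by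
            intro a b
            rw [ccen a (Set.mem_univ _), mul_assoc a, ← mul_assoc (c (i + 1)) (c (i + 1)), ce.eq,
              ← mul_assoc, ← ccen a (Set.mem_univ _), mul_assoc]
          rw [h4, h4] at h3
          rw [aux_mem]
          simp only [Units.val_mul]
          rw [← mul_assoc, ← mul_assoc, h3]
          simp [mul_assoc]
        rw [Subgroup.mem_normalizer_iff]
        intro y
        have := key y
        have e1 : x * y * x⁻¹ = (x * y * x⁻¹ * y⁻¹) * y := by group
        constructor
        · intro hy
          rw [e1]
          exact mul_mem this hy
        · intro hy
          rw [e1] at hy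
          exact (Subgroup.mul_mem_cancel_left _ this).1 hy

end Aux

/-- STATEMENT 19: If a factorizable inverse monoid with zero, whose natural connection
is a dual isomorphism onto a sublattice of the lattice of subgroups of the group of
units, is `G`-nilpotent, then: (i) every idempotent is subcentral; (ii) every nonzero
idempotent `f` admits an idempotent `e < f` with `f` central in `e↑`; (iii) every
`0`-minimal idempotent is central in `S`. -/
theorem stmt_19 {S : Type*} [InverseMonoidWithZero S] (hfact : Factorizable S)
    (hθ : NatconnDualIso S) (hnil : GNilpotent S) :
    (∀ f : S, IsIdempotentElem f → IsSubcentralIdem f) ∧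
    (∀ f : S, IsIdempotentElem f → f ≠ 0 →
      ∃ e : S, IsIdempotentElem e ∧ NatLe e f ∧ e ≠ f ∧ CentralIn (upfilter e) f) ∧
    (∀ f : S, IsIdempotentElem f → f ≠ 0 →
      (∀ g : S, IsIdempotentElem g → NatLe g f → g = 0 ∨ g = f) →
      CentralIn Set.univ f) := by
  have hser := aux_series hfact hθ hnil
  have z0 : IsIdempotentElem (0 : S) := InverseMonoidWithZero.zero_mul 0
  have hii : ∀ f : S, IsIdempotentElem f → f ≠ 0 →
      ∃ e : S, IsIdempotentElem e ∧ NatLe e f ∧ e ≠ f ∧ CentralIn (upfilter e) f := by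
    intro f hf hf0
    obtain ⟨n, h, h0, hn, hid, hc⟩ := hser f hf
    classical
    have hex : ∃ i, h i = f := ⟨n, hn⟩
    have hle : Nat.find hex ≤ n := Nat.find_min' hex hn
    have hsp := Nat.find_spec hex
    have hmin := fun m => @Nat.find_min _ _ hex m
    generalize Nat.find hex = m at *
    cases m with
    | zero => exact absurd (hsp.symm.trans h0) hf0
    | succ k =>
      have := hc k (by omega)
      rw [hsp] at this
      exact ⟨h k, hid k (by omega), this.1, hmin k (by omega), this⟩
  refine ⟨?_, hii, ?_⟩
  · intro f hf
    obtain ⟨n, h, h0, hn, hid, hc⟩ := hser f hf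
    refine ⟨n + 1, fun i => if i ≤ n then h i else 1, ⟨?_, ?_, ?_, ?_⟩, n, by omega, ?_⟩
    · simpa using h0
    · simp
    · intro i _
      by_cases hi : i ≤ n
      · simpa [hi] using hid i hi
      · simp [hi, IsIdempotentElem]
    · intro i hi
      by_cases hi' : i < n
      · have h1 : i + 1 ≤ n := hi'
        simpa [hi'.le, h1] using hc i hi'
      · obtain rfl : i = n := by omega
        simp only [le_refl, if_true, Nat.not_succ_le_self, if_false]
        refine ⟨⟨h i, hid i le_rfl, (mul_one _).symm⟩, fun s _ => by rw [one_mul, mul_one]⟩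
    · simpa using hn
  · intro f hf hf0 hmin
    obtain ⟨e, he, hle, hne, hcen⟩ := hii f hf hf0
    rcases hmin e he hle with rfl | rfl
    · refine ⟨Set.mem_univ _, fun s _ => hcen.2 s ⟨0, z0, (InverseMonoidWithZero.zero_mul _).symm⟩⟩
    · exact absurd rfl hne
end
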